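/- Let α, β, γ ∈ [0,1] satisfy 0 < β < 1, α/2 ≤ min{β, 1−β}, and γ/2 ≤ min{β, 1−β}. Then f_A(α,β) + f_D(β,γ) ≤ g(α,γ), where g(α,γ) equals f_A(α,γ) if α ≤ 2γ(1−γ); equals h(γ) − h(α) if 2γ(1−γ) ≤ α ≤ 1 − 2γ(1−γ); and equals f_A(1−α, γ) if α ≥ 1 − 2γ(1−γ). -/

import Mathlib

/-- Binary entropy function (base-2 logs), with the convention `0 * log 0 = 0`. -/
noncomputable def binEnt (x : ℝ) : ℝ :=
  -(x * Real.logb 2 x) - (1 - x) * Real.logb 2 (1 - x)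

/-- The spectral shape exponent of the accumulator:
`f_A(α,β) = α − h(β) + (1−α)·h((β−α/2)/(1−α))`. -/
noncomputable def fA (α β : ℝ) : ℝ :=
  α - binEnt β + (1 - α) * binEnt ((β - α / 2) / (1 - α))

/-- The spectral shape exponent of the discrete derivative:
`f_D(α,β) = (1−α)·h(β/(2(1−α))) + α·h(β/(2α)) − h(α)`. -/
noncomputable def fD (α β : ℝ) : ℝ :=
  (1 - α) * binEnt (β / (2 * (1 - α))) + α * binEnt (β / (2 * α)) - binEnt α

/-- The piecewise upper bound `g(α,γ)`: `f_A(α,γ)` if `α ≤ 2γ(1−γ)`,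
`h(γ) − h(α)` if `2γ(1−γ) ≤ α ≤ 1 − 2γ(1−γ)`, and `f_A(1−α,γ)` if `α ≥ 1 − 2γ(1−γ)`. -/
noncomputable def gBound (α γ : ℝ) : ℝ :=
  if α ≤ 2 * γ * (1 - γ) then fA α γ
  else if α ≤ 1 - 2 * γ * (1 - γ) then binEnt γ - binEnt α
  else fA (1 - α) γ

/-!
Consider two bits, each equal to one with probability `b`, that differ with probability `x`, and let
`P(x, b)` be their joint entropy. Then `f_A(x, b) = P(x, b) - h(b) - h(x)` and
`f_D(b, x) = P(x, b) - 2 h(b)`, up to the choice of the base of the logarithms, so the middle range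
of `g` is subadditivity of entropy, applied to the two bits and to one bit together with the sum of
both.

For `α ≤ 2γ(1 - γ)`, the difference `P(x, β) - P(x, γ)` is monotone in `x`, in a direction that
depends on which of `β` and `γ` is closer to `1/2`. Comparing its value at `α` either with the one
at `0`, where `P(0, b) = h(b)`, or with the one at `2γ(1 - γ)`, where the bits with parameter `γ`
are independent, gives the bound. The range `α ≥ 1 - 2γ(1 - γ)` reduces to this one because
`P(x, b) ≤ P(1 - x, b)` for `x ≥ 1/2`.
-/

open Real

section MulOneSub

theorem mul_one_sub_le_min (b : ℝ) : b * (1 - b) ≤ min b (1 - b) :=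
  le_min (by linarith [sq_nonneg b]) (by linarith [sq_nonneg (1 - b)])

theorem mul_one_sub_le_mul_one_sub_of_min_le_min {b c : ℝ} (h : min b (1 - b) ≤ min c (1 - c)) :
    b * (1 - b) ≤ c * (1 - c) := by
  rcases le_total b (1 - b) with hb | hb <;> rcases le_total c (1 - c) with hc | hc <;>
    simp only [min_eq_left, min_eq_right, hb, hc] at h <;> nlinarith

end MulOneSub

section Entropy

theorem mul_negMulLog_div {q t : ℝ} (h : q = 0 → t = 0) :
    q * negMulLog (t / q) = negMulLog t + t * log q := by
  have hmul := negMulLog_mul q (t / q)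
  rw [mul_div_cancel_of_imp' h] at hmul
  have hlog : t / q * negMulLog q = -(t * log q) := by
    rw [negMulLog, ← mul_assoc, mul_neg, div_mul_cancel_of_imp h, neg_mul]
  linarith

theorem two_mul_negMulLog_div_two (t : ℝ) :
    2 * negMulLog (t / 2) = negMulLog t + t * log 2 :=
  mul_negMulLog_div fun h => absurd h two_ne_zero

theorem mul_binEntropy_div {q t : ℝ} (h : q = 0 → t = 0) :
    q * binEntropy (t / q) = negMulLog t + negMulLog (q - t) - negMulLog q := by
  rcases eq_or_ne q 0 with rfl | hq
  · simp [h rfl]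
  · rw [binEntropy_eq_negMulLog_add_negMulLog_one_sub, one_sub_div hq, mul_add,
      mul_negMulLog_div h, mul_negMulLog_div fun hq0 => absurd hq0 hq]
    simp only [negMulLog]
    ring

theorem log_two_mul_binEnt (x : ℝ) : log 2 * binEnt x = binEntropy x := by
  have hlog : log 2 ≠ 0 := (log_pos one_lt_two).ne'
  rw [binEntropy_eq_negMulLog_add_negMulLog_one_sub, binEnt, negMulLog, negMulLog, logb, logb]
  field_simp
  ring

theorem negMulLog_add_mul_log_le_sub {p q : ℝ} (hp : 0 ≤ p) (hq : 0 ≤ q) (h : q = 0 → p = 0) :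
    negMulLog p + p * log q ≤ q - p := by
  rcases hq.eq_or_lt with rfl | hq
  · simp [h rfl]
  · calc negMulLog p + p * log q = q * negMulLog (p / q) := (mul_negMulLog_div h).symm
      _ ≤ q * (1 - p / q) := by
        gcongr
        exact negMulLog_le_one_sub_self (by positivity)
      _ = q - p := by field_simp

theorem negMulLog_add_mul_log_add_mul_log_sub_le {p r c T : ℝ} (hp : 0 ≤ p) (hpr : p ≤ r)
    (hpc : p ≤ c) (hrT : r ≤ T) :
    negMulLog p + p * log r + p * log c - p * log T ≤ r * c / T - p := by
  have hr₀ : 0 ≤ r := hp.trans hpr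
  rcases hp.eq_or_lt with rfl | hp
  · simpa using div_nonneg (mul_nonneg hr₀ hpc) (hr₀.trans hrT)
  · have hr : 0 < r := hp.trans_le hpr
    have hc : 0 < c := hp.trans_le hpc
    have hT : 0 < T := hr.trans_le hrT
    have hq : 0 < r * c / T := by positivity
    have h := negMulLog_add_mul_log_le_sub hp.le hq.le fun h => absurd h hq.ne'
    rw [log_div (mul_pos hr hc).ne' hT.ne', log_mul hr.ne' hc.ne'] at h
    linarith

theorem sum_sum_negMulLog_add_le {ι κ : Type*} [Fintype ι] [Fintype κ] {p : ι → κ → ℝ}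
    (hp : ∀ i j, 0 ≤ p i j) :
    ∑ i, ∑ j, negMulLog (p i j) + negMulLog (∑ i, ∑ j, p i j) ≤
      ∑ i, negMulLog (∑ j, p i j) + ∑ j, negMulLog (∑ i, p i j) := by
  set r : ι → ℝ := fun i => ∑ j, p i j
  set c : κ → ℝ := fun j => ∑ i, p i j
  set T : ℝ := ∑ i, r i
  have hr₀ i : 0 ≤ r i := Finset.sum_nonneg fun j _ => hp i j
  have hpr i j : p i j ≤ r i :=
    Finset.single_le_sum (fun j _ => hp i j) (Finset.mem_univ j)
  have hpc i j : p i j ≤ c j :=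
    Finset.single_le_sum (f := fun i => p i j) (fun i _ => hp i j) (Finset.mem_univ i)
  have hrT i : r i ≤ T := Finset.single_le_sum (fun i _ => hr₀ i) (Finset.mem_univ i)
  have hcT : ∑ j, c j = T := Finset.sum_comm
  -- Gibbs' inequality compares `p` with the product `r i * c j / T` of its marginals.
  have hsum := Finset.sum_le_sum fun i (_ : i ∈ Finset.univ) =>
    Finset.sum_le_sum fun j (_ : j ∈ Finset.univ) =>
      negMulLog_add_mul_log_add_mul_log_sub_le (hp i j) (hpr i j) (hpc i j) (hrT i)
  have hrow : ∑ i, ∑ j, p i j * log (r i) = -∑ i, negMulLog (r i) := by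
    simp [negMulLog, r, Finset.sum_mul]
  have hcol : ∑ i, ∑ j, p i j * log (c j) = -∑ j, negMulLog (c j) := by
    rw [Finset.sum_comm]
    simp [negMulLog, c, Finset.sum_mul]
  have htotal : ∑ i, ∑ j, p i j * log T = -negMulLog T := by
    simp [negMulLog, T, r, Finset.sum_mul]
  have hproduct : ∑ i, ∑ j, r i * c j / T = T := by
    simp_rw [← Finset.sum_div, ← Finset.mul_sum, hcT, ← Finset.sum_mul]
    exact mul_self_div_self T
  simp only [Finset.sum_add_distrib, Finset.sum_sub_distrib, hrow, hcol, htotal, hproduct] at hsum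
  linarith

theorem two_by_two_negMulLog_add_le {a b c d : ℝ} (ha : 0 ≤ a) (hb : 0 ≤ b) (hc : 0 ≤ c)
    (hd : 0 ≤ d) :
    negMulLog a + negMulLog b + negMulLog c + negMulLog d + negMulLog (a + b + c + d) ≤
      negMulLog (a + b) + negMulLog (c + d) + negMulLog (a + c) + negMulLog (b + d) := by
  have hp : ∀ i j, 0 ≤ !![a, b; c, d] i j := by
    simp [Fin.forall_fin_two, ha, hb, hc, hd]
  have h := sum_sum_negMulLog_add_le hp
  simp only [Fin.sum_univ_two, Matrix.of_apply, Matrix.cons_val_zero, Matrix.cons_val_one] at h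
  rw [← add_assoc (a + b)] at h
  linarith

end Entropy

/-- The Shannon entropy (in nats) of a pair of bits, each equal to one with probability `b`, that
differ with probability `x`; the two ways of differing have probability `x / 2` each. It serves to
write `fA x b` and `fD b x` as joint entropies minus entropies of single bits. -/
noncomputable def pairEntropy (x b : ℝ) : ℝ :=
  negMulLog (b - x / 2) + 2 * negMulLog (x / 2) + negMulLog (1 - b - x / 2)

section PairEntropy

variable {x b c : ℝ}

theorem pairEntropy_zero (b : ℝ) : pairEntropy 0 b = binEntropy b := by
  simp [pairEntropy, binEntropy_eq_negMulLog_add_negMulLog_one_sub]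

theorem pairEntropy_two_mul_mul_one_sub (b : ℝ) :
    pairEntropy (2 * b * (1 - b)) b = 2 * binEntropy b := by
  rw [pairEntropy, show b - 2 * b * (1 - b) / 2 = b * b by ring,
    show 2 * b * (1 - b) / 2 = b * (1 - b) by ring,
    show 1 - b - b * (1 - b) = (1 - b) * (1 - b) by ring,
    binEntropy_eq_negMulLog_add_negMulLog_one_sub]
  simp only [negMulLog_mul]
  ring

theorem log_two_mul_fA (hb : x / 2 ≤ min b (1 - b)) :
    log 2 * fA x b = pairEntropy x b - binEntropy b - binEntropy x := by
  obtain ⟨hb₀, hb₁⟩ := le_min_iff.1 hb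
  have hdiv := mul_binEntropy_div (q := 1 - x) (t := b - x / 2) fun _ => by linarith
  rw [show 1 - x - (b - x / 2) = 1 - b - x / 2 by ring] at hdiv
  calc log 2 * fA x b
      = x * log 2 - binEntropy b + (1 - x) * binEntropy ((b - x / 2) / (1 - x)) := by
        simp only [fA, ← log_two_mul_binEnt]
        ring
    _ = pairEntropy x b - binEntropy b - binEntropy x := by
        rw [hdiv, pairEntropy, two_mul_negMulLog_div_two,
          binEntropy_eq_negMulLog_add_negMulLog_one_sub x]
        ring

theorem log_two_mul_fD (hx : 0 ≤ x) (hb : x / 2 ≤ min b (1 - b)) :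
    log 2 * fD b x = pairEntropy x b - 2 * binEntropy b := by
  obtain ⟨hb₀, hb₁⟩ := le_min_iff.1 hb
  have hdiv₀ := mul_binEntropy_div (q := b) (t := x / 2) fun _ => by linarith
  have hdiv₁ := mul_binEntropy_div (q := 1 - b) (t := x / 2) fun _ => by linarith
  rw [div_div] at hdiv₀ hdiv₁
  calc log 2 * fD b x
      = (1 - b) * binEntropy (x / (2 * (1 - b))) + b * binEntropy (x / (2 * b))
          - binEntropy b := by
        simp only [fD, ← log_two_mul_binEnt]
        ring
    _ = pairEntropy x b - 2 * binEntropy b := by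
        rw [hdiv₀, hdiv₁, pairEntropy, binEntropy_eq_negMulLog_add_negMulLog_one_sub b]
        ring

theorem pairEntropy_le_two_mul_binEntropy (hx : 0 ≤ x) (hb : x / 2 ≤ min b (1 - b)) :
    pairEntropy x b ≤ 2 * binEntropy b := by
  obtain ⟨hb₀, hb₁⟩ := le_min_iff.1 hb
  have h := two_by_two_negMulLog_add_le (a := b - x / 2) (b := x / 2) (c := x / 2)
    (d := 1 - b - x / 2) (by linarith) (by linarith) (by linarith) (by linarith)
  rw [show b - x / 2 + x / 2 + x / 2 + (1 - b - x / 2) = 1 by ring, sub_add_cancel,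
    add_sub_cancel, negMulLog_one] at h
  rw [pairEntropy, binEntropy_eq_negMulLog_add_negMulLog_one_sub]
  linarith

theorem pairEntropy_le_binEntropy_add_binEntropy (hx : 0 ≤ x) (hb : x / 2 ≤ min b (1 - b)) :
    pairEntropy x b ≤ binEntropy x + binEntropy b := by
  obtain ⟨hb₀, hb₁⟩ := le_min_iff.1 hb
  have h := two_by_two_negMulLog_add_le (a := x / 2) (b := x / 2) (c := b - x / 2)
    (d := 1 - b - x / 2) (by linarith) (by linarith) (by linarith) (by linarith)
  rw [show x / 2 + x / 2 + (b - x / 2) + (1 - b - x / 2) = 1 by ring,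
    show b - x / 2 + (1 - b - x / 2) = 1 - x by ring, add_halves, add_sub_cancel,
    add_sub_cancel, negMulLog_one] at h
  rw [pairEntropy, binEntropy_eq_negMulLog_add_negMulLog_one_sub,
    binEntropy_eq_negMulLog_add_negMulLog_one_sub]
  linarith

theorem pairEntropy_le_pairEntropy_one_sub (hx : 1 / 2 ≤ x) (hb : x / 2 ≤ min b (1 - b)) :
    pairEntropy x b ≤ pairEntropy (1 - x) b := by
  obtain ⟨hb₀, hb₁⟩ := le_min_iff.1 hb
  -- The column sums are the probabilities of `11` and `00` for a pair that differs with
  -- probability `1 - x`.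
  have h := two_by_two_negMulLog_add_le (a := b - x / 2) (b := 1 - b - x / 2)
    (c := (2 * x - 1) / 2) (d := (2 * x - 1) / 2)
    (by linarith) (by linarith) (by linarith) (by linarith)
  rw [show b - x / 2 + (1 - b - x / 2) = 1 - x by ring,
    show 1 - x + (2 * x - 1) / 2 + (2 * x - 1) / 2 = x by ring,
    show b - x / 2 + (2 * x - 1) / 2 = b - (1 - x) / 2 by ring,
    show 1 - b - x / 2 + (2 * x - 1) / 2 = 1 - b - (1 - x) / 2 by ring, add_halves] at h
  rw [pairEntropy, pairEntropy, two_mul_negMulLog_div_two, two_mul_negMulLog_div_two]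
  linarith [two_mul_negMulLog_div_two (2 * x - 1)]

theorem continuous_pairEntropy (b : ℝ) : Continuous fun x => pairEntropy x b := by
  unfold pairEntropy
  fun_prop

theorem hasDerivAt_pairEntropy (hx : x ≠ 0) (hb₀ : b - x / 2 ≠ 0) (hb₁ : 1 - b - x / 2 ≠ 0) :
    HasDerivAt (fun x => pairEntropy x b)
      (log ((b - x / 2) * (1 - b - x / 2)) / 2 - log (x / 2)) x := by
  have hhalf : HasDerivAt (fun x : ℝ => x / 2) (1 / 2) x := (hasDerivAt_id x).div_const 2
  have h₀ := (hasDerivAt_negMulLog hb₀).comp x (hhalf.const_sub b)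
  have hdiff := (hasDerivAt_negMulLog (div_ne_zero hx two_ne_zero)).comp x hhalf
  have h₁ := (hasDerivAt_negMulLog hb₁).comp x (hhalf.const_sub (1 - b))
  refine ((h₀.add (hdiff.const_mul 2)).add h₁).congr_deriv ?_
  rw [log_mul hb₀ hb₁]
  ring

theorem monotoneOn_pairEntropy_sub (h : min b (1 - b) ≤ min c (1 - c)) :
    MonotoneOn (fun x => pairEntropy x c - pairEntropy x b) (Set.Icc 0 (2 * min b (1 - b))) := by
  refine monotoneOn_of_hasDerivWithinAt_nonneg
    (f' := fun x => log ((c - x / 2) * (1 - c - x / 2)) / 2 - log (x / 2) -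
      (log ((b - x / 2) * (1 - b - x / 2)) / 2 - log (x / 2)))
    (convex_Icc _ _) ((continuous_pairEntropy c).sub (continuous_pairEntropy b)).continuousOn
    (fun x hx => ?_) fun x hx => ?_
  all_goals
    obtain ⟨hx₀, hxb⟩ : 0 < x ∧ x < 2 * min b (1 - b) := by rwa [interior_Icc] at hx
    obtain ⟨hb₀, hb₁⟩ := lt_min_iff.1 (show x / 2 < min b (1 - b) by linarith)
    obtain ⟨hc₀, hc₁⟩ := lt_min_iff.1 (show x / 2 < min c (1 - c) by linarith)
  · exact ((hasDerivAt_pairEntropy hx₀.ne' (sub_pos.2 hc₀).ne' (sub_pos.2 hc₁).ne').sub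
      (hasDerivAt_pairEntropy hx₀.ne' (sub_pos.2 hb₀).ne' (sub_pos.2 hb₁).ne')).hasDerivWithinAt
  · have hlog := log_le_log (mul_pos (sub_pos.2 hb₀) (sub_pos.2 hb₁))
      (show (b - x / 2) * (1 - b - x / 2) ≤ (c - x / 2) * (1 - c - x / 2) by
        linarith [mul_one_sub_le_mul_one_sub_of_min_le_min h])
    linarith

theorem pairEntropy_sub_le_binEntropy_sub (h : min b (1 - b) ≤ min c (1 - c)) (hx : 0 ≤ x)
    (hb : x / 2 ≤ min b (1 - b)) :
    pairEntropy x b - pairEntropy x c ≤ binEntropy b - binEntropy c := by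
  have hmem : x ∈ Set.Icc 0 (2 * min b (1 - b)) := ⟨hx, by linarith⟩
  have hmono := monotoneOn_pairEntropy_sub h ⟨le_rfl, hx.trans hmem.2⟩ hmem hx
  simp only [pairEntropy_zero] at hmono
  linarith

theorem pairEntropy_sub_le_two_mul_binEntropy_sub (h : min c (1 - c) ≤ min b (1 - b))
    (hx : 0 ≤ x) (hxc : x ≤ 2 * c * (1 - c)) :
    pairEntropy x b - pairEntropy x c ≤ 2 * (binEntropy b - binEntropy c) := by
  have hc := mul_one_sub_le_min c
  have hmono := monotoneOn_pairEntropy_sub h ⟨hx, by linarith⟩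
    ⟨hx.trans hxc, by linarith⟩ hxc
  simp only [pairEntropy_two_mul_mul_one_sub] at hmono
  linarith [pairEntropy_le_two_mul_binEntropy (hx.trans hxc) (b := b) (by linarith)]

theorem pairEntropy_add_pairEntropy_le {α β γ : ℝ} (hα₀ : 0 ≤ α) (hγ₀ : 0 ≤ γ)
    (hαβ : α / 2 ≤ min β (1 - β)) (hγβ : γ / 2 ≤ min β (1 - β)) (hαγ : α ≤ 2 * γ * (1 - γ)) :
    pairEntropy α β + pairEntropy γ β ≤ pairEntropy α γ + 3 * binEntropy β - binEntropy γ := by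
  rcases le_total (min β (1 - β)) (min γ (1 - γ)) with h | h
  · linarith [pairEntropy_sub_le_binEntropy_sub h hα₀ hαβ,
      pairEntropy_le_two_mul_binEntropy hγ₀ hγβ]
  · linarith [pairEntropy_sub_le_two_mul_binEntropy_sub h hα₀ hαγ,
      pairEntropy_le_binEntropy_add_binEntropy hγ₀ hγβ]

end PairEntropy

/-- `f_A(α,β) + f_D(β,γ) ≤ g(α,γ)` on the joint domain. -/
theorem fAD_le_gBound (α β γ : ℝ)
    (hα0 : 0 ≤ α) (hα1 : α ≤ 1) (hβ0 : 0 ≤ β) (hβ1 : β ≤ 1) (hγ0 : 0 ≤ γ) (hγ1 : γ ≤ 1)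
    (hβpos : 0 < β) (hβlt : β < 1)
    (hαdom : α / 2 ≤ min β (1 - β)) (hγdom : γ / 2 ≤ min β (1 - β)) :
    fA α β + fD β γ ≤ gBound α γ := by
  have hγ := mul_one_sub_le_min γ
  refine le_of_mul_le_mul_left ?_ (log_pos one_lt_two)
  rw [mul_add, log_two_mul_fA hαdom, log_two_mul_fD hγ0 hγdom, gBound]
  split_ifs with hlow hmid
  · rw [log_two_mul_fA (by linarith)]
    linarith [pairEntropy_add_pairEntropy_le hα0 hγ0 hαdom hγdom hlow]
  · rw [mul_sub, log_two_mul_binEnt, log_two_mul_binEnt]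
    linarith [pairEntropy_le_binEntropy_add_binEntropy hγ0 hγdom,
      pairEntropy_le_two_mul_binEntropy hα0 hαdom]
  · have hα : 1 / 2 ≤ α := by nlinarith [sq_nonneg (2 * γ - 1)]
    rw [log_two_mul_fA (by linarith), binEntropy_one_sub]
    linarith [pairEntropy_le_pairEntropy_one_sub hα hαdom,
      pairEntropy_add_pairEntropy_le (α := 1 - α) (by linarith) hγ0
        (by linarith) hγdom (by linarith)]
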